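/- Let I ⊆ A = K[x_1,…,x_n] be a nonzero proper monomial ideal. Then the Krull dimension of the fiber ring F(I) = R(I)/mR(I) equals c(I) + 1, where c(I) = max{dim F : F a compact face of conv(I)} and dim F denotes the dimension of the affine hull of F. In other words, the analytic spread ℓ of I satisfies ℓ = c(I) + 1. -/

import Mathlib

open MvPolynomial Pointwise

attribute [local instance] Classical.propDecidable

noncomputable section

/-- The real exponent vector of a monomial exponent `a : Fin n →₀ ℕ`. -/
def expVec {n : ℕ} (a : Fin n →₀ ℕ) : Fin n → ℝ := fun i => (a i : ℝ)

/-- The standard inner product on `ℝ^n`. -/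
def dotR {n : ℕ} (u v : Fin n → ℝ) : ℝ := ∑ i, u i * v i

/-- A monomial ideal: an ideal generated by a set of monomials. -/
def IsMonomialIdeal {K : Type*} [Field K] {n : ℕ} (I : Ideal (MvPolynomial (Fin n) K)) : Prop :=
  ∃ S : Set (Fin n →₀ ℕ), I = Ideal.span ((fun a => (monomial a (1 : K))) '' S)

/-- The Newton polyhedron of an ideal: the convex hull of the exponent vectors of the
monomials belonging to the ideal. -/
def newtonPolyhedron {K : Type*} [Field K] {n : ℕ} (I : Ideal (MvPolynomial (Fin n) K)) :
    Set (Fin n → ℝ) :=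
  convexHull ℝ {v | ∃ a : Fin n →₀ ℕ, monomial a (1 : K) ∈ I ∧ v = expVec a}

/-- The hyperplane `{v : ⟨u,v⟩ = c}` is a supporting hyperplane of `C`:
`C ⊆ {v : ⟨u,v⟩ ≥ c}` and the hyperplane meets `C`. -/
def IsSupp {n : ℕ} (C : Set (Fin n → ℝ)) (u : Fin n → ℝ) (c : ℝ) : Prop :=
  (∀ v ∈ C, c ≤ dotR u v) ∧ ∃ v ∈ C, dotR u v = c

/-- `F` is a proper face of `C`: `F = S ∩ C` for some supporting hyperplane `S`, `F ≠ C`. -/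
def IsProperFace {n : ℕ} (C F : Set (Fin n → ℝ)) : Prop :=
  ∃ u c, u ≠ 0 ∧ IsSupp C u c ∧ F = {v ∈ C | dotR u v = c} ∧ F ≠ C

/-- A compact face is a proper face that is compact. -/
def IsCompactFace {n : ℕ} (C F : Set (Fin n → ℝ)) : Prop :=
  IsProperFace C F ∧ IsCompact F

/-- A maximal compact face: a compact face maximal under inclusion. -/
def IsMaxCompactFace {n : ℕ} (C F : Set (Fin n → ℝ)) : Prop :=
  IsCompactFace C F ∧ ∀ G, IsCompactFace C G → F ⊆ G → F = G

/-- The graded maximal ideal `(x_1, …, x_n)` of `K[x_1, …, x_n]`. -/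
def maxIdeal (K : Type*) [Field K] (n : ℕ) : Ideal (MvPolynomial (Fin n) K) :=
  Ideal.span (Set.range fun i => (X i : MvPolynomial (Fin n) K))

/-- `f` is a minimal generator of the monomial ideal `L` if `f ∈ L` and `f ∉ (x_1,…,x_n)·L`. -/
def IsMinGen {K : Type*} [Field K] {n : ℕ} (L : Ideal (MvPolynomial (Fin n) K))
    (f : MvPolynomial (Fin n) K) : Prop :=
  f ∈ L ∧ f ∉ maxIdeal K n * L

/-- `L` is a reduction ideal of `I`: `L ⊆ I` and `L·I^{m-1} = I^m` for some `m ≥ 1`. -/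
def IsReduction {K : Type*} [Field K] {n : ℕ} (L I : Ideal (MvPolynomial (Fin n) K)) : Prop :=
  L ≤ I ∧ ∃ m : ℕ, 1 ≤ m ∧ L * I ^ (m - 1) = I ^ m

/-- `c(I)`: the maximum of the dimensions (of affine hulls) of the compact faces of the
Newton polyhedron of `I`. -/
def maxCompactFaceDim {K : Type*} [Field K] {n : ℕ} (I : Ideal (MvPolynomial (Fin n) K)) : ℕ :=
  sSup {d : ℕ | ∃ F, IsCompactFace (newtonPolyhedron I) F ∧
    d = Module.finrank ℝ (affineSpan ℝ F).direction}


theorem aux_krull_integral {R S : Type*} [CommRing R] [CommRing S] [Algebra R S]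
    [Algebra.IsIntegral R S] (hinj : Function.Injective (algebraMap R S)) :
    ringKrullDim S = ringKrullDim R := by
  apply le_antisymm
  · refine Order.krullDim_le_of_strictMono (PrimeSpectrum.comap (algebraMap R S)) ?_
    intro I J h
    exact Ideal.IsIntegral.comap_lt_comap (R := R) (I := I.asIdeal) (J := J.asIdeal) h
  · refine iSup_le fun l => ?_
    have : FaithfulSMul R S := (faithfulSMul_iff_algebraMap_injective R S).mpr hinj
    obtain ⟨⟨P, hP, hPo⟩⟩ := Ideal.nonempty_primesOver (S := S) (RelSeries.head l).asIdeal
    obtain ⟨L, hL, -⟩ := Ideal.exists_ltSeries_of_hasGoingUp l P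
    rw [← hL]
    exact le_iSup (fun (p : LTSeries (PrimeSpectrum S)) => (p.length : WithBot ℕ∞)) L

theorem aux_noether {K D : Type*} [Field K] [CommRing D] [IsDomain D] [Algebra K D]
    {s : ℕ} (g : MvPolynomial (Fin s) K →ₐ[K] D) (hg : Function.Injective g)
    (hi : g.IsIntegral) {ι : Type*} {x : ι → D} (hx : IsTranscendenceBasis K x) :
    Finite ι ∧ Nat.card ι = s ∧ ringKrullDim D = s := by
  have h1 : IsTranscendenceBasis K (fun i => g (X i)) := by
    rw [isTranscendenceBasis_iff_algebraicIndependent_isAlgebraic]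
    constructor
    · have : (aeval (fun i => g (X i)) : MvPolynomial (Fin s) K →ₐ[K] D) = g := by
        ext; simp
      rw [AlgebraicIndependent, this]; exact hg
    · have hr : Algebra.adjoin K (Set.range fun i => g (X i)) = g.range := by
        rw [Algebra.adjoin_range_eq_range_aeval]
        congr 1
        ext; simp
      rw [hr]
      constructor
      intro d
      obtain ⟨p, hp, hp'⟩ := hi d
      have : IsIntegral g.range d := by
        refine ⟨p.map g.rangeRestrict.toRingHom, hp.map _, ?_⟩
        rw [Polynomial.eval₂_map]
        exact hp'
      exact this.isAlgebraic
  have h2 := hx.lift_cardinalMk_eq h1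
  have hf : Finite ι := by
    rw [← Cardinal.lt_aleph0_iff_finite]
    rw [← Cardinal.lift_lt_aleph0, h2]
    simp
  refine ⟨hf, ?_, ?_⟩
  · have := congrArg Cardinal.toNat h2
    simpa [Nat.card] using this
  · algebraize [g.toRingHom]
    rw [aux_krull_integral (R := MvPolynomial (Fin s) K) hg]
    simp

theorem aux_lower {K B : Type*} [Field K] [CommRing B] [Algebra K B] [Algebra.FiniteType K B]
    {ι : Type*} [Finite ι] (x : ι → B) (hx : AlgebraicIndependent K x) :
    (Nat.card ι : WithBot ℕ∞) ≤ ringKrullDim B := by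
  have hx' : Function.Injective ((aeval x : MvPolynomial ι K →ₐ[K] B) : MvPolynomial ι K →+* B) := hx
  obtain ⟨P, hP, hPc⟩ := Ideal.exists_comap_eq_of_mem_minimalPrimes_of_injective hx' ⊥
    (by rw [IsDomain.minimalPrimes_eq_singleton_bot]; rfl)
  have hy : AlgebraicIndependent K (fun i => Ideal.Quotient.mkₐ K P (x i)) := by
    rw [algebraicIndependent_iff]
    intro p hp
    have h1 : (aeval fun i => Ideal.Quotient.mkₐ K P (x i)) p = Ideal.Quotient.mkₐ K P (aeval x p) := by
      rw [← AlgHom.comp_apply, comp_aeval]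
    rw [h1] at hp
    have h2 : aeval x p ∈ P := Ideal.Quotient.eq_zero_iff_mem.mp hp
    have h3 : p ∈ P.comap ((aeval x : MvPolynomial ι K →ₐ[K] B) : MvPolynomial ι K →+* B) := h2
    rw [hPc] at h3
    exact h3
  have : Algebra.FiniteType K (B ⧸ P) := inferInstance
  obtain ⟨s, g, hg, hi⟩ := exists_integral_inj_algHom_of_fg K (B ⧸ P)
  have : Algebra.IsAlgebraic (Algebra.adjoin K (Set.univ : Set (B ⧸ P))) (B ⧸ P) := by
    rw [Algebra.adjoin_univ]
    constructor
    intro d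
    have : d = algebraMap (⊤ : Subalgebra K (B ⧸ P)) (B ⧸ P) ⟨d, trivial⟩ := rfl
    rw [this]
    exact isAlgebraic_algebraMap _
  obtain ⟨u, hu1, -, hu⟩ := exists_isTranscendenceBasis_between (R := K) _ Set.univ
    (Set.subset_univ _) hy.coe_range
  obtain ⟨hf, hc, hd⟩ := aux_noether g hg hi hu
  refine le_trans ?_ (ringKrullDim_quotient_le P)
  rw [hd, ← hc]
  have : Nat.card ι ≤ Nat.card u :=
    Nat.card_le_card_of_injective (fun i => (⟨_, hu1 ⟨i, rfl⟩⟩ : u)) (by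
      intro i j h
      exact hy.injective (congrArg Subtype.val h))
  exact_mod_cast this

theorem aux_upper {K B : Type*} [Field K] [CommRing B] [Algebra K B]
    {G : Type*} [Finite G] (T : G → B) (hT : Algebra.adjoin K (Set.range T) = ⊤) (N : ℕ)
    (h : ∀ s : Finset G, AlgebraicIndependent K (fun i : s => T i) → s.card ≤ N) :
    ringKrullDim B ≤ N := by
  classical
  rcases subsingleton_or_nontrivial B with hB | hB
  · rw [ringKrullDim_eq_bot_of_subsingleton]; exact bot_le
  have : Algebra.FiniteType K B :=
    ⟨⟨(Set.finite_range T).toFinset, by simpa using hT⟩⟩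
  obtain ⟨s, g, hg, hi⟩ := exists_integral_inj_algHom_of_fg K B
  have hdim : ringKrullDim B = s := by
    algebraize [g.toRingHom]
    rw [aux_krull_integral (R := MvPolynomial (Fin s) K) hg]
    simp
  obtain ⟨P, hP, hPc⟩ := Ideal.exists_comap_eq_of_mem_minimalPrimes_of_injective
    (f := (g : MvPolynomial (Fin s) K →+* B)) hg ⊥
    (by rw [IsDomain.minimalPrimes_eq_singleton_bot]; rfl)
  have hg' : Function.Injective ((Ideal.Quotient.mkₐ K P).comp g) := by
    rw [injective_iff_map_eq_zero]
    intro p hp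
    have h2 : g p ∈ P := Ideal.Quotient.eq_zero_iff_mem.mp hp
    have h3 : p ∈ P.comap (g : MvPolynomial (Fin s) K →+* B) := h2
    rw [hPc] at h3
    exact h3
  have hi' : ((Ideal.Quotient.mkₐ K P).comp g).IsIntegral :=
    RingHom.IsIntegral.trans _ _ hi (RingHom.isIntegral_of_surjective _ Ideal.Quotient.mk_surjective)
  have hT' : Algebra.adjoin K (Set.range fun i => Ideal.Quotient.mkₐ K P (T i)) = ⊤ := by
    have : (Set.range fun i => Ideal.Quotient.mkₐ K P (T i)) =
        Ideal.Quotient.mkₐ K P '' Set.range T := by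
      rw [← Set.range_comp]; rfl
    rw [this, ← AlgHom.map_adjoin, hT, Algebra.map_top, AlgHom.range_eq_top]
    exact Ideal.Quotient.mkₐ_surjective K P
  have : Algebra.IsAlgebraic (Algebra.adjoin K (Set.range fun i => Ideal.Quotient.mkₐ K P (T i)))
      (B ⧸ P) := by
    rw [hT']
    constructor
    intro d
    have : d = algebraMap (⊤ : Subalgebra K (B ⧸ P)) (B ⧸ P) ⟨d, trivial⟩ := rfl
    rw [this]
    exact isAlgebraic_algebraMap _
  obtain ⟨u, hu1, hu⟩ := exists_isTranscendenceBasis_subset (R := K)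
    (Set.range fun i => Ideal.Quotient.mkₐ K P (T i))
  obtain ⟨hf, hc, hd⟩ := aux_noether _ hg' hi' hu
  have hu2 : ∀ y : u, ∃ i, Ideal.Quotient.mkₐ K P (T i) = y := fun y => hu1 y.2
  choose f hf' using hu2
  have hfi : Function.Injective f := by
    intro a b hab
    apply Subtype.ext
    rw [← hf' a, ← hf' b, hab]
  have := Fintype.ofFinite u
  have key : AlgebraicIndependent K (fun i : Finset.univ.image f => T i) := by
    have h1 : AlgebraicIndependent K (fun y : u => T (f y)) := by
      apply AlgebraicIndependent.of_comp (Ideal.Quotient.mkₐ K P)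
      have : (Ideal.Quotient.mkₐ K P ∘ fun y : u => T (f y)) = ((↑) : u → B ⧸ P) := by
        funext y; exact hf' y
      rw [this]; exact hu.1
    have e : ∀ i : Finset.univ.image f, ∃ y, f y = i := by
      intro i
      obtain ⟨y, -, hy⟩ := Finset.mem_image.mp i.2
      exact ⟨y, hy⟩
    choose e he using e
    have := h1.comp e (by
      intro a b hab
      apply Subtype.ext
      rw [← he a, ← he b, hab])
    convert this using 2 with i
    simp [he]
  have := h _ key
  rw [Finset.card_image_of_injective _ hfi, Finset.card_univ, ← Nat.card_eq_fintype_card, hc] at this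
  rw [hdim]
  exact_mod_cast this

theorem aux_farkas {W ι : Type*} [AddCommGroup W] [Module ℚ W] (s : Finset ι)
    (α : ι → W →ₗ[ℚ] ℚ) (γ : W →ₗ[ℚ] ℚ)
    (h : ∀ x, (∀ i ∈ s, α i x ≤ 0) → γ x ≤ 0) :
    ∃ l : ι → ℚ, (∀ i, 0 ≤ l i) ∧ γ = ∑ i ∈ s, l i • α i := by
  classical
  induction s using Finset.induction_on generalizing α γ with
  | empty =>
    refine ⟨0, fun _ => le_rfl, ?_⟩
    ext x
    have h1 := h x (by simp)
    have h2 := h (-x) (by simp)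
    simp at h2 ⊢
    linarith
  | insert k s hk ih =>
    by_cases hc : ∀ x, (∀ i ∈ s, α i x ≤ 0) → γ x ≤ 0
    · obtain ⟨l, hl, hg⟩ := ih α γ hc
      refine ⟨fun i => if i = k then 0 else l i, fun i => ?_, ?_⟩
      · dsimp only; split_ifs
        · exact le_rfl
        · exact hl i
      · rw [Finset.sum_insert hk, hg]
        simp only [if_true, zero_smul, zero_add]
        refine Finset.sum_congr rfl fun i hi => ?_
        rw [if_neg]; rintro rfl; exact hk hi
    · push Not at hc
      obtain ⟨x0, hx0, hg0⟩ := hc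
      have hk0 : 0 < α k x0 := by
        by_contra hcon
        have := h x0 (by
          intro i hi
          rcases Finset.mem_insert.mp hi with rfl | hi
          · linarith
          · exact hx0 i hi)
        linarith
      set x1 : W := (α k x0)⁻¹ • x0 with hx1
      have e1 : α k x1 = 1 := by simp [hx1, hk0.ne']
      have e2 : ∀ i ∈ s, α i x1 ≤ 0 := by
        intro i hi
        simp only [hx1, map_smul, smul_eq_mul]
        exact mul_nonpos_of_nonneg_of_nonpos (by positivity) (hx0 i hi)
      have e3 : 0 < γ x1 := by
        simp only [hx1, map_smul, smul_eq_mul]; positivity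
      obtain ⟨l, hl, hg⟩ := ih (fun i => α i - α i x1 • α k) (γ - γ x1 • α k) (by
        intro x hx
        have := h (x - α k x • x1) (by
          intro i hi
          rcases Finset.mem_insert.mp hi with rfl | hi
          · simp [e1]
          · have := hx i hi
            simp at this ⊢
            linarith)
        simp at this ⊢
        linarith)
      have hpos : 0 ≤ γ x1 - ∑ i ∈ s, l i * α i x1 := by
        have : ∑ i ∈ s, l i * α i x1 ≤ 0 :=
          Finset.sum_nonpos fun i hi => mul_nonpos_of_nonneg_of_nonpos (hl i) (e2 i hi)
        linarith
      refine ⟨fun i => if i = k then γ x1 - ∑ i ∈ s, l i * α i x1 else l i, fun i => ?_, ?_⟩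
      · dsimp only; split_ifs
        · exact hpos
        · exact hl i
      · rw [Finset.sum_insert hk]
        have : ∑ i ∈ s, (if i = k then γ x1 - ∑ i ∈ s, l i * α i x1 else l i) • α i
            = ∑ i ∈ s, l i • α i := by
          refine Finset.sum_congr rfl fun i hi => ?_
          rw [if_neg]; rintro rfl; exact hk hi
        rw [this]
        dsimp only
        rw [if_pos rfl]
        have hg' : γ = γ x1 • α k + ∑ i ∈ s, l i • (α i - α i x1 • α k) := by
          rw [← hg]; abel
        have h2 : ∑ i ∈ s, l i • (α i - α i x1 • α k)
            = ∑ i ∈ s, l i • α i - (∑ i ∈ s, l i * α i x1) • α k := by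
          rw [Finset.sum_smul, ← Finset.sum_sub_distrib]
          refine Finset.sum_congr rfl fun i hi => ?_
          rw [smul_sub, smul_smul]
        rw [h2] at hg'
        nth_rewrite 1 [hg']
        rw [sub_smul]; abel

theorem aux_clear {ι : Type*} [Finite ι] (q : ι → ℚ) :
    ∃ (D : ℕ) (z : ι → ℤ), 0 < D ∧ ∀ i, (z i : ℚ) = D * q i := by
  classical
  have := Fintype.ofFinite ι
  refine ⟨∏ i, (q i).den, fun i => (q i).num * ∏ j ∈ Finset.univ.erase i, ((q j).den : ℤ),
    Finset.prod_pos fun i _ => (q i).den_pos, fun i => ?_⟩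
  rw [← Finset.mul_prod_erase Finset.univ _ (Finset.mem_univ i)]
  push_cast
  nth_rewrite 3 [← Rat.num_div_den (q i)]
  have : ((q i).den : ℚ) ≠ 0 := by exact_mod_cast (q i).den_nz
  field_simp

theorem aux_stiemke {n : ℕ} {ι : Type*} [Fintype ι] (v : ι → Fin n → ℤ) :
    (∃ u : Fin n → ℝ, (∀ j, 0 < u j) ∧ ∀ i, 0 ≤ ∑ j, u j * v i j) ∨
    (∃ m : ι → ℕ, (∀ j, ∑ i, (m i : ℤ) * v i j ≤ 0) ∧ ∃ j, ∑ i, (m i : ℤ) * v i j < 0) := by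
  classical
  set fv : ι → ((Fin n → ℚ) →ₗ[ℚ] ℚ) := fun i => ∑ j, (v i j : ℚ) • LinearMap.proj j with hfv
  have fvx : ∀ i x, fv i x = ∑ j, (v i j : ℚ) * x j := by intro i x; simp [hfv]
  by_cases H : ∀ j : Fin n, ∃ x : Fin n → ℚ, (∀ i, 0 ≤ fv i x) ∧ (∀ k, 0 ≤ x k) ∧ 0 < x j
  · left
    choose x h1 h2 h3 using H
    refine ⟨fun k => ((∑ j, x j k : ℚ) : ℝ), fun k => ?_, fun i => ?_⟩
    · have : 0 < ∑ j, x j k := by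
        refine Finset.sum_pos' (fun j _ => h2 j k) ⟨k, Finset.mem_univ _, h3 k⟩
      dsimp only
      exact_mod_cast this
    · have : (0 : ℚ) ≤ ∑ k, (∑ j, x j k) * v i k := by
        have e : ∑ k, (∑ j, x j k) * (v i k : ℚ) = ∑ j, fv i (x j) := by
          simp only [fvx, Finset.sum_mul]
          rw [Finset.sum_comm]
          refine Finset.sum_congr rfl fun a _ => Finset.sum_congr rfl fun b _ => mul_comm _ _
        rw [e]
        exact Finset.sum_nonneg fun j _ => h1 j i
      dsimp only
      exact_mod_cast this
  · right
    push Not at H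
    obtain ⟨j, hj⟩ := H
    obtain ⟨l, hl, hg⟩ := aux_farkas (Finset.univ : Finset (ι ⊕ Fin n))
      (Sum.elim (fun i => - fv i) (fun k => - LinearMap.proj k)) (LinearMap.proj j) (by
        intro x hx
        refine hj x (fun i => ?_) (fun k => ?_)
        · have := hx (Sum.inl i) (Finset.mem_univ _)
          simpa using this
        · have := hx (Sum.inr k) (Finset.mem_univ _)
          simpa using this)
    obtain ⟨D, z, hD, hz⟩ := aux_clear (fun i => l (Sum.inl i))
    have hz0 : ∀ i, 0 ≤ z i := by
      intro i
      have : (0 : ℚ) ≤ z i := by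
        rw [hz]; exact mul_nonneg (by positivity) (hl _)
      exact_mod_cast this
    have key : ∀ k, ∑ i, l (Sum.inl i) * v i k = - l (Sum.inr k) - (if j = k then 1 else 0) := by
      intro k
      have := congrArg (fun f => f (Pi.single k (1 : ℚ))) hg
      simp only [Fintype.sum_sum_type, LinearMap.add_apply, LinearMap.sum_apply, LinearMap.smul_apply,
        Sum.elim_inl, Sum.elim_inr, LinearMap.neg_apply, fvx, LinearMap.proj_apply, smul_eq_mul,
        Pi.single_apply, mul_ite, mul_one, mul_zero, Finset.sum_ite_eq',
        Finset.mem_univ, if_true, mul_neg, Finset.sum_neg_distrib] at this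
      linarith
    have key2 : ∀ k, ((∑ i, ((z i).toNat : ℤ) * v i k : ℤ) : ℚ)
        = D * (- l (Sum.inr k) - (if j = k then 1 else 0)) := by
      intro k
      rw [← key, Finset.mul_sum]
      push_cast
      refine Finset.sum_congr rfl fun i _ => ?_
      have : (((z i).toNat : ℤ) : ℚ) = z i := by rw [Int.toNat_of_nonneg (hz0 i)]
      have h2 : (((z i).toNat : ℕ) : ℚ) = z i := by exact_mod_cast this
      rw [h2, hz, mul_assoc]
    have hD' : (0 : ℚ) < D := by exact_mod_cast hD
    refine ⟨fun i => (z i).toNat, fun k => ?_, j, ?_⟩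
    · have : ((∑ i, ((z i).toNat : ℤ) * v i k : ℤ) : ℚ) ≤ 0 := by
        rw [key2]
        refine mul_nonpos_of_nonneg_of_nonpos hD'.le ?_
        have := hl (Sum.inr k)
        split_ifs <;> linarith
      exact_mod_cast this
    · have : ((∑ i, ((z i).toNat : ℤ) * v i j : ℤ) : ℚ) < 0 := by
        rw [key2]
        refine mul_neg_of_pos_of_neg hD' ?_
        have := hl (Sum.inr j)
        simp; linarith
      exact_mod_cast this

theorem aux_affine {n : ℕ} {ι : Type*} [Fintype ι] (a : ι → Fin n → ℕ)
    (h : ∀ α β : ι → ℕ, ∑ i, α i = ∑ i, β i →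
      (∀ j, ∑ i, α i * a i j = ∑ i, β i * a i j) → α = β) :
    AffineIndependent ℝ (fun i => (fun j => (a i j : ℝ) : Fin n → ℝ)) := by
  classical
  rw [affineIndependent_iff]
  intro s w hw0 hw1 i0 hi0
  by_contra hne
  obtain ⟨f, hf⟩ : ∃ f : ℝ →ₗ[ℚ] ℚ, f (w i0) ≠ 0 := by
    exact Module.Projective.exists_dual_ne_zero ℚ hne
  set q : ι → ℚ := fun i => if i ∈ s then f (w i) else 0 with hq
  have q0 : ∑ i, q i = 0 := by
    have := congrArg f hw0
    simpa [hq, Finset.sum_ite_mem] using this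
  have q1 : ∀ j, ∑ i, q i * a i j = 0 := by
    intro j
    have h1 := congrFun hw1 j
    simp only [Finset.sum_apply, Pi.smul_apply, smul_eq_mul, Pi.zero_apply] at h1
    have := congrArg f h1
    rw [map_sum, map_zero] at this
    rw [← this]
    simp only [hq, ite_mul, zero_mul, Finset.sum_ite_mem, Finset.univ_inter]
    refine Finset.sum_congr rfl fun i _ => ?_
    rw [mul_comm (w i), ← nsmul_eq_mul, map_nsmul, nsmul_eq_mul, mul_comm]
  obtain ⟨D, z, hD, hz⟩ := aux_clear q
  have z0 : ∑ i, z i = 0 := by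
    have : ((∑ i, z i : ℤ) : ℚ) = 0 := by
      push_cast; simp only [hz, ← Finset.mul_sum, q0, mul_zero]
    exact_mod_cast this
  have z1 : ∀ j, ∑ i, z i * a i j = 0 := by
    intro j
    have : ((∑ i, z i * a i j : ℤ) : ℚ) = 0 := by
      push_cast; simp only [hz, mul_assoc, ← Finset.mul_sum, q1, mul_zero]
    exact_mod_cast this
  have hzz : ∀ i, z i = ((z i).toNat : ℤ) - ((- z i).toNat : ℤ) := fun i => by omega
  have := h (fun i => (z i).toNat) (fun i => (- z i).toNat) (by
      zify
      rw [← sub_eq_zero, ← Finset.sum_sub_distrib, ← z0]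
      exact Finset.sum_congr rfl fun i _ => (hzz i).symm) (by
      intro j
      zify
      rw [← sub_eq_zero, ← Finset.sum_sub_distrib, ← z1 j]
      refine Finset.sum_congr rfl fun i _ => ?_
      rw [← sub_mul]
      congr 1
      exact (hzz i).symm)
  have h3 := congrFun this i0
  have h4 : z i0 = 0 := by
    have := hzz i0
    omega
  have h5 := hz i0
  rw [h4] at h5
  have : q i0 = 0 := by
    have hD' : (D : ℚ) ≠ 0 := by exact_mod_cast hD.ne'
    have := h5.symm
    simpa [hD'] using this
  simp [hq, hi0] at this
  exact hf this
theorem aux_dot_add {n : ℕ} (u v w : Fin n → ℝ) : dotR u (v + w) = dotR u v + dotR u w := by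
  simp [dotR, mul_add, Finset.sum_add_distrib]

theorem aux_dot_smul {n : ℕ} (u v : Fin n → ℝ) (r : ℝ) : dotR u (r • v) = r * dotR u v := by
  simp only [dotR, Pi.smul_apply, smul_eq_mul, Finset.mul_sum]
  exact Finset.sum_congr rfl fun i _ => by ring

theorem aux_mem {K : Type*} [Field K] {n : ℕ} (G : Set (Fin n →₀ ℕ)) (a : Fin n →₀ ℕ) :
    monomial a (1 : K) ∈ Ideal.span ((fun a => (monomial a (1 : K))) '' G) ↔ ∃ g ∈ G, g ≤ a := by
  rw [mem_ideal_span_monomial_image]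
  simp [support_monomial]

theorem aux_expVec_add {n : ℕ} (a b : Fin n →₀ ℕ) : expVec (a + b) = expVec a + expVec b := by
  funext i; simp [expVec]

theorem aux_dot_nonneg {n : ℕ} {u : Fin n → ℝ} (hu : ∀ i, 0 < u i) (a : Fin n →₀ ℕ) :
    0 ≤ dotR u (expVec a) :=
  Finset.sum_nonneg fun i _ => mul_nonneg (hu i).le (Nat.cast_nonneg _)

theorem aux_dot_pos {n : ℕ} {u : Fin n → ℝ} (hu : ∀ i, 0 < u i) {a : Fin n →₀ ℕ} (ha : a ≠ 0) :
    0 < dotR u (expVec a) := by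
  obtain ⟨i, hi⟩ := Finsupp.ne_iff.mp ha
  refine Finset.sum_pos' (fun i _ => mul_nonneg (hu i).le (Nat.cast_nonneg _))
    ⟨i, Finset.mem_univ _, mul_pos (hu i) ?_⟩
  have : 0 < a i := Nat.pos_of_ne_zero hi
  simpa [expVec] using this

/-- The face cut out by a strictly positive functional is the convex hull of finitely many points. -/
theorem aux_face_hull {K : Type*} [Field K] {n : ℕ} (G : Finset (Fin n →₀ ℕ))
    (I : Ideal (MvPolynomial (Fin n) K))
    (hI : I = Ideal.span ((fun a => (monomial a (1 : K))) '' (G : Set (Fin n →₀ ℕ))))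
    {u : Fin n → ℝ} (hu : ∀ i, 0 < u i) {c : ℝ} (hc : ∀ g ∈ G, c ≤ dotR u (expVec g)) :
    (∀ v ∈ newtonPolyhedron I, c ≤ dotR u v) ∧
    {v ∈ newtonPolyhedron I | dotR u v = c} =
      convexHull ℝ (expVec '' {g : Fin n →₀ ℕ | g ∈ G ∧ dotR u (expVec g) = c}) := by
  set H := convexHull ℝ (expVec '' {g : Fin n →₀ ℕ | g ∈ G ∧ dotR u (expVec g) = c}) with hH
  have hconv : Convex ℝ {v : Fin n → ℝ | c ≤ dotR u v ∧ (dotR u v = c → v ∈ H)} := by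
    rintro x ⟨hx1, hx2⟩ y ⟨hy1, hy2⟩ a b ha hb hab
    have e : dotR u (a • x + b • y) = a * dotR u x + b * dotR u y := by
      rw [aux_dot_add, aux_dot_smul, aux_dot_smul]
    have p1 : 0 ≤ a * (dotR u x - c) := mul_nonneg ha (by linarith)
    have p2 : 0 ≤ b * (dotR u y - c) := mul_nonneg hb (by linarith)
    have e2 : a * dotR u x + b * dotR u y - c = a * (dotR u x - c) + b * (dotR u y - c) := by
      linear_combination c * hab
    refine ⟨by rw [e]; linarith, fun h => ?_⟩
    rw [e] at h
    have z1 : a * (dotR u x - c) = 0 := by linarith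
    have z2 : b * (dotR u y - c) = 0 := by linarith
    rcases mul_eq_zero.mp z1 with h1 | h1
    · have : b = 1 := by linarith
      subst h1; subst this
      simp at z2 ⊢
      exact hy2 (by linarith)
    · rcases mul_eq_zero.mp z2 with h2 | h2
      · have : a = 1 := by linarith
        subst h2; subst this
        simp
        exact hx2 (by linarith)
      · exact convex_convexHull ℝ _ (hx2 (by linarith)) (hy2 (by linarith)) ha hb hab
  have hsub : newtonPolyhedron I ⊆ {v : Fin n → ℝ | c ≤ dotR u v ∧ (dotR u v = c → v ∈ H)} := by
    refine convexHull_min ?_ hconv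
    rintro v ⟨a, ha, rfl⟩
    rw [hI, aux_mem] at ha
    obtain ⟨g, hg, hga⟩ := ha
    obtain ⟨e, rfl⟩ := exists_add_of_le hga
    have h1 := hc g hg
    have h2 : dotR u (expVec (g + e)) = dotR u (expVec g) + dotR u (expVec e) := by
      rw [aux_expVec_add, aux_dot_add]
    have h3 := aux_dot_nonneg hu e
    refine ⟨by rw [h2]; linarith, fun h => ?_⟩
    have he : e = 0 := by
      by_contra hne
      have := aux_dot_pos hu hne
      linarith
    subst he
    refine subset_convexHull ℝ _ ⟨g, ⟨hg, ?_⟩, by simp⟩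
    rwa [add_zero] at h
  refine ⟨fun v hv => (hsub hv).1, Set.Subset.antisymm (fun v hv => (hsub hv.1).2 hv.2) ?_⟩
  refine convexHull_min ?_ ?_
  · rintro _ ⟨g, ⟨hg, hgc⟩, rfl⟩
    refine ⟨subset_convexHull ℝ _ ⟨g, ?_, rfl⟩, hgc⟩
    rw [hI, aux_mem]
    exact ⟨g, hg, le_rfl⟩
  · rintro x ⟨hx1, hx2⟩ y ⟨hy1, hy2⟩ a b ha hb hab
    refine ⟨convex_convexHull ℝ _ hx1 hy1 ha hb hab, ?_⟩
    rw [aux_dot_add, aux_dot_smul, aux_dot_smul, hx2, hy2, ← add_mul, hab, one_mul]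

theorem aux_isCompactFace {K : Type*} [Field K] {n : ℕ} (hn : 0 < n) (G : Finset (Fin n →₀ ℕ))
    (I : Ideal (MvPolynomial (Fin n) K))
    (hI : I = Ideal.span ((fun a => (monomial a (1 : K))) '' (G : Set (Fin n →₀ ℕ))))
    {u : Fin n → ℝ} (hu : ∀ i, 0 < u i) {c : ℝ} (hc : ∀ g ∈ G, c ≤ dotR u (expVec g))
    (hex : ∃ g ∈ G, dotR u (expVec g) = c) :
    IsCompactFace (newtonPolyhedron I) {v ∈ newtonPolyhedron I | dotR u v = c} := by
  obtain ⟨h1, h2⟩ := aux_face_hull G I hI hu hc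
  obtain ⟨g, hg, hgc⟩ := hex
  have hmem : ∀ e, expVec (g + e) ∈ newtonPolyhedron I := by
    intro e
    refine subset_convexHull ℝ _ ⟨g + e, ?_, rfl⟩
    rw [hI, aux_mem]
    exact ⟨g, hg, le_self_add⟩
  refine ⟨⟨u, c, ?_, ⟨h1, ⟨expVec g, ?_, hgc⟩⟩, rfl, ?_⟩, ?_⟩
  · intro h
    have := hu ⟨0, hn⟩
    simp [h] at this
  · simpa using hmem 0
  · intro h
    have h3 := hmem (Finsupp.single ⟨0, hn⟩ 1)
    rw [← h] at h3
    have h4 := h3.2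
    rw [aux_expVec_add, aux_dot_add, hgc] at h4
    have := aux_dot_pos hu (a := Finsupp.single ⟨0, hn⟩ 1) (by simp)
    linarith
  · rw [h2]
    refine Set.Finite.isCompact_convexHull ℝ (Set.Finite.image _ ?_)
    exact G.finite_toSet.subset fun g hg => hg.1

theorem aux_compactFace {K : Type*} [Field K] {n : ℕ} (G : Finset (Fin n →₀ ℕ))
    (I : Ideal (MvPolynomial (Fin n) K))
    (hI : I = Ideal.span ((fun a => (monomial a (1 : K))) '' (G : Set (Fin n →₀ ℕ))))
    {F : Set (Fin n → ℝ)} (hF : IsCompactFace (newtonPolyhedron I) F) :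
    ∃ (u : Fin n → ℝ) (c : ℝ), (∀ i, 0 < u i) ∧ (∀ g ∈ G, c ≤ dotR u (expVec g)) ∧
      (∃ g ∈ G, dotR u (expVec g) = c) ∧
      F = convexHull ℝ (expVec '' {g : Fin n →₀ ℕ | g ∈ G ∧ dotR u (expVec g) = c}) := by
  obtain ⟨⟨u, c, hu0, ⟨hs1, ⟨v0, hv0, hv0c⟩⟩, hFe, hne⟩, hcomp⟩ := hF
  have htr : ∀ (i : Fin n) (N : ℕ) (v), v ∈ newtonPolyhedron I →
      v + (N : ℝ) • Pi.single i 1 ∈ newtonPolyhedron I := by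
    intro i N
    have hc1 : Convex ℝ {v : Fin n → ℝ | v + (N : ℝ) • Pi.single i 1 ∈ newtonPolyhedron I} := by
      have := (convex_convexHull ℝ {v | ∃ a : Fin n →₀ ℕ, monomial a (1 : K) ∈ I ∧ v = expVec a}).translate_preimage_left
        ((N : ℝ) • (Pi.single i 1 : Fin n → ℝ))
      exact this
    refine convexHull_min ?_ hc1
    rintro v ⟨a, ha, rfl⟩
    refine subset_convexHull ℝ _ ⟨a + Finsupp.single i N, ?_, ?_⟩
    · rw [hI, aux_mem] at ha ⊢
      obtain ⟨g, hg, hga⟩ := ha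
      exact ⟨g, hg, hga.trans le_self_add⟩
    · rw [aux_expVec_add]
      congr 1
      funext j
      by_cases hj : j = i
      · subst hj; simp [expVec]
      · simp [expVec, hj, Finsupp.single_apply, Ne.symm hj]
  have hds : ∀ i, dotR u (Pi.single i 1) = u i := by
    intro i; simp [dotR, Pi.single_apply]
  have hu : ∀ i, 0 < u i := by
    intro i
    have h1 := hs1 _ (htr i 1 v0 hv0)
    rw [aux_dot_add, aux_dot_smul, hds, hv0c] at h1
    simp at h1
    rcases h1.lt_or_eq with h | h
    · exact h
    exfalso
    have h2 : ∀ N : ℕ, v0 + (N : ℝ) • Pi.single i 1 ∈ F := by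
      intro N
      rw [hFe]
      refine ⟨htr i N v0 hv0, ?_⟩
      rw [aux_dot_add, aux_dot_smul, hds, hv0c, ← h]; simp
    obtain ⟨R, hR⟩ := (hcomp.image (continuous_apply i)).isBounded.bddAbove
    obtain ⟨N, hN⟩ := exists_nat_gt (R - v0 i)
    have := hR ⟨_, h2 N, rfl⟩
    simp at this
    linarith
  have hGm : ∀ g ∈ G, expVec g ∈ newtonPolyhedron I := by
    intro g hg
    refine subset_convexHull ℝ _ ⟨g, ?_, rfl⟩
    rw [hI, aux_mem]
    exact ⟨g, hg, le_rfl⟩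
  have hc : ∀ g ∈ G, c ≤ dotR u (expVec g) := fun g hg => hs1 _ (hGm g hg)
  have h2 := (aux_face_hull G I hI hu hc).2
  refine ⟨u, c, hu, hc, ?_, hFe.trans h2⟩
  have hv : v0 ∈ convexHull ℝ (expVec '' {g : Fin n →₀ ℕ | g ∈ G ∧ dotR u (expVec g) = c}) := by
    rw [← h2]; exact ⟨hv0, hv0c⟩
  obtain ⟨_, g, ⟨hg, hgc⟩, -⟩ := convexHull_nonempty_iff.mp ⟨_, hv⟩
  exact ⟨g, hg, hgc⟩

abbrev AuxJ {K : Type*} [Field K] {n : ℕ} (I : Ideal (MvPolynomial (Fin n) K)) :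
    Ideal (reesAlgebra I) :=
  Ideal.span (Set.range fun i => algebraMap (MvPolynomial (Fin n) K) (reesAlgebra I) (X i))

def auxTau {K : Type*} [Field K] {n : ℕ} (I : Ideal (MvPolynomial (Fin n) K))
    (a : Fin n →₀ ℕ) (h : monomial a (1 : K) ∈ I) : reesAlgebra I :=
  ⟨Polynomial.monomial 1 (monomial a 1), reesAlgebra.monomial_mem.mpr (by simpa using h)⟩

def auxT {K : Type*} [Field K] {n : ℕ} (I : Ideal (MvPolynomial (Fin n) K))
    (a : Fin n →₀ ℕ) (h : monomial a (1 : K) ∈ I) : reesAlgebra I ⧸ AuxJ I :=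
  Ideal.Quotient.mk _ (auxTau I a h)

theorem auxTau_prod {K : Type*} [Field K] {n : ℕ} (I : Ideal (MvPolynomial (Fin n) K))
    {ι : Type*} (s : Finset ι) (a : ι → Fin n →₀ ℕ) (h : ∀ i, monomial (a i) (1 : K) ∈ I)
    (α : ι → ℕ) :
    ((∏ i ∈ s, auxTau I (a i) (h i) ^ α i : reesAlgebra I) : Polynomial (MvPolynomial (Fin n) K)) =
      Polynomial.monomial (∑ i ∈ s, α i) (monomial (∑ i ∈ s, α i • a i) (1 : K)) := by
  classical
  induction s using Finset.induction_on with
  | empty => simp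
  | insert i s hi ih =>
    rw [Finset.prod_insert hi, Finset.sum_insert hi, Finset.sum_insert hi, Subalgebra.coe_mul, ih,
      Subalgebra.coe_pow]
    simp only [auxTau]
    rw [Polynomial.monomial_pow, Polynomial.monomial_mul_monomial, MvPolynomial.monomial_pow,
      MvPolynomial.monomial_mul]
    simp

theorem aux_algMap {K : Type*} [Field K] {n : ℕ} (I : Ideal (MvPolynomial (Fin n) K))
    (q : MvPolynomial (Fin n) K) :
    Ideal.Quotient.mk (AuxJ I) (algebraMap _ (reesAlgebra I) q) =
      algebraMap K (reesAlgebra I ⧸ AuxJ I) (constantCoeff q) := by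
  have : ((Ideal.Quotient.mk (AuxJ I)).comp (algebraMap _ (reesAlgebra I))) =
      (algebraMap K (reesAlgebra I ⧸ AuxJ I)).comp (constantCoeff (R := K) (σ := Fin n)) := by
    apply MvPolynomial.ringHom_ext
    · intro r
      rw [RingHom.comp_apply, RingHom.comp_apply, constantCoeff_C]
      rfl
    · intro i
      rw [RingHom.comp_apply, RingHom.comp_apply, constantCoeff_X, map_zero]
      rw [Ideal.Quotient.eq_zero_iff_mem]
      exact Ideal.subset_span ⟨i, rfl⟩
  exact congrArg (fun f => f q) this

theorem aux_adjoin {K : Type*} [Field K] {n : ℕ} (G : Finset (Fin n →₀ ℕ))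
    (I : Ideal (MvPolynomial (Fin n) K))
    (hI : I = Ideal.span ((fun a => (monomial a (1 : K))) '' (G : Set (Fin n →₀ ℕ))))
    (h : ∀ g : G, monomial (g : Fin n →₀ ℕ) (1 : K) ∈ I) :
    Algebra.adjoin K (Set.range fun g : G => auxT I g (h g)) = ⊤ := by
  set S := Algebra.adjoin K (Set.range fun g : G => auxT I g (h g)) with hS
  have key0 : ∀ q, Ideal.Quotient.mk (AuxJ I) (algebraMap (MvPolynomial (Fin n) K) (reesAlgebra I) q) ∈ S := by
    intro q
    rw [aux_algMap]
    exact S.algebraMap_mem _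
  have key1 : ∀ f (hf : f ∈ I), Ideal.Quotient.mk (AuxJ I)
      ⟨Polynomial.monomial 1 f, reesAlgebra.monomial_mem.mpr (by simpa using hf)⟩ ∈ S := by
    suffices ∀ f, f ∈ Ideal.span ((fun a => (monomial a (1 : K))) '' (G : Set (Fin n →₀ ℕ))) →
        ∃ r : reesAlgebra I, (r : Polynomial _) = Polynomial.monomial 1 f ∧
          Ideal.Quotient.mk (AuxJ I) r ∈ S by
      intro f hf
      obtain ⟨r, hr, hr2⟩ := this f (hI ▸ hf)
      convert hr2
      exact hr.symm
    intro f hf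
    induction hf using Submodule.span_induction with
    | mem x hx =>
      obtain ⟨g, hg, rfl⟩ := hx
      exact ⟨auxTau I g (h ⟨g, hg⟩), rfl, Algebra.subset_adjoin ⟨⟨g, hg⟩, rfl⟩⟩
    | zero => exact ⟨0, by simp, by simp⟩
    | add x y _ _ hx hy =>
      obtain ⟨r, hr, hr2⟩ := hx
      obtain ⟨r', hr', hr2'⟩ := hy
      exact ⟨r + r', by simp [hr, hr'], by rw [map_add]; exact S.add_mem hr2 hr2'⟩
    | smul q x _ hx =>
      obtain ⟨r, hr, hr2⟩ := hx
      refine ⟨algebraMap _ _ q * r, ?_, by rw [map_mul]; exact S.mul_mem (key0 q) hr2⟩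
      rw [Subalgebra.coe_mul, hr, smul_eq_mul, ← Polynomial.C_mul_monomial]
      rfl
  rw [eq_top_iff]
  rintro b -
  obtain ⟨r, rfl⟩ := Ideal.Quotient.mk_surjective b
  suffices ∀ p, p ∈ reesAlgebra I → ∃ r : reesAlgebra I, (r : Polynomial _) = p ∧
          Ideal.Quotient.mk (AuxJ I) r ∈ S by
    obtain ⟨r', hr, hr2⟩ := this r.1 r.2
    rwa [← Subtype.ext hr]
  intro p hp
  rw [← adjoin_monomial_eq_reesAlgebra] at hp
  induction hp using Algebra.adjoin_induction with
  | mem x hx =>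
    obtain ⟨f, hf, rfl⟩ := hx
    exact ⟨_, rfl, key1 f hf⟩
  | algebraMap q => exact ⟨algebraMap _ _ q, rfl, key0 q⟩
  | add x y _ _ hx hy =>
      obtain ⟨r, hr, hr2⟩ := hx
      obtain ⟨r', hr', hr2'⟩ := hy
      exact ⟨r + r', by simp [hr, hr'], by rw [map_add]; exact S.add_mem hr2 hr2'⟩
  | mul x y _ _ hx hy =>
      obtain ⟨r, hr, hr2⟩ := hx
      obtain ⟨r', hr', hr2'⟩ := hy
      exact ⟨r * r', by simp [hr, hr'], by rw [map_mul]; exact S.mul_mem hr2 hr2'⟩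

/-- Non-minimal products vanish in the fiber ring. -/
theorem aux_zero {K : Type*} [Field K] {n : ℕ} (I : Ideal (MvPolynomial (Fin n) K))
    {ι : Type*} [Fintype ι] (a : ι → Fin n →₀ ℕ) (h : ∀ i, monomial (a i) (1 : K) ∈ I)
    (α β : ι → ℕ) (hsum : ∑ i, α i = ∑ i, β i) (hle : ∑ i, α i • a i ≤ ∑ i, β i • a i)
    (hne : ∑ i, α i • a i ≠ ∑ i, β i • a i) :
    ∏ i, auxT I (a i) (h i) ^ β i = 0 := by
  obtain ⟨d, hd⟩ := exists_add_of_le hle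
  have hd0 : d ≠ 0 := by rintro rfl; exact hne (by simpa using hd.symm)
  obtain ⟨j, hj⟩ := Finsupp.ne_iff.mp hd0
  have hj' : Finsupp.single j 1 ≤ d := by
    rw [Finsupp.single_le_iff]
    exact Nat.pos_of_ne_zero hj
  obtain ⟨d', rfl⟩ := exists_add_of_le hj'
  have : ∏ i, auxT I (a i) (h i) ^ β i =
      Ideal.Quotient.mk (AuxJ I) (∏ i, auxTau I (a i) (h i) ^ β i) := by
    simp [auxT, map_prod]
  rw [this]
  have e : ∏ i, auxTau I (a i) (h i) ^ β i = (algebraMap _ _ (monomial d' (1 : K)) *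
      ∏ i, auxTau I (a i) (h i) ^ α i) * algebraMap _ _ (X j : MvPolynomial (Fin n) K) := by
    apply Subtype.ext
    rw [Subalgebra.coe_mul, Subalgebra.coe_mul, auxTau_prod, auxTau_prod, hd, hsum]
    change _ = Polynomial.C _ * _ * Polynomial.C _
    rw [Polynomial.C_mul_monomial, Polynomial.monomial_mul_C, MvPolynomial.X,
      MvPolynomial.monomial_mul, MvPolynomial.monomial_mul]
    congr 2
    · congr 1
      abel
    · simp
  rw [e, Ideal.Quotient.eq_zero_iff_mem]
  exact Ideal.mul_mem_left _ _ (Ideal.subset_span ⟨j, rfl⟩)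

theorem aux_inj_of_indep {K : Type*} [Field K] {n : ℕ} (I : Ideal (MvPolynomial (Fin n) K))
    {ι : Type*} [Fintype ι] (a : ι → Fin n →₀ ℕ) (h : ∀ i, monomial (a i) (1 : K) ∈ I)
    (hind : AlgebraicIndependent K (fun i => auxT I (a i) (h i)))
    (α β : ι → ℕ) (hsum : ∑ i, α i = ∑ i, β i) (he : ∑ i, α i • a i = ∑ i, β i • a i) :
    α = β := by
  have e1 : ∏ i, auxTau I (a i) (h i) ^ α i = ∏ i, auxTau I (a i) (h i) ^ β i := by
    apply Subtype.ext
    rw [auxTau_prod, auxTau_prod, hsum, he]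
  have e2 : ∀ γ : ι → ℕ, aeval (fun i => auxT I (a i) (h i))
      (monomial (Finsupp.equivFunOnFinite.symm γ) (1 : K)) =
      Ideal.Quotient.mk (AuxJ I) (∏ i, auxTau I (a i) (h i) ^ γ i) := by
    intro γ
    rw [aeval_monomial, Finsupp.prod_fintype _ _ (by simp)]
    simp [auxT, map_prod]
  have e3 := hind ((e2 α).trans ((congrArg _ e1).trans (e2 β).symm))
  have e4 := MvPolynomial.monomial_left_injective (one_ne_zero) e3
  exact Finsupp.equivFunOnFinite.symm.injective e4

theorem aux_prod_ne_zero {K : Type*} [Field K] {n : ℕ} (I : Ideal (MvPolynomial (Fin n) K))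
    {ι : Type*} [Fintype ι] (a : ι → Fin n →₀ ℕ) (h : ∀ i, monomial (a i) (1 : K) ∈ I)
    (hind : AlgebraicIndependent K (fun i => auxT I (a i) (h i)))
    (β : ι → ℕ) : ∏ i, auxT I (a i) (h i) ^ β i ≠ 0 := by
  intro h0
  have e2 : aeval (fun i => auxT I (a i) (h i))
      (monomial (Finsupp.equivFunOnFinite.symm β) (1 : K)) = 0 := by
    rw [aeval_monomial, Finsupp.prod_fintype _ _ (by simp)]
    simpa using h0
  have e3 := hind (e2.trans (map_zero _).symm)
  simp at e3

theorem aux_pow_bound {K : Type*} [Field K] {n : ℕ} (G : Finset (Fin n →₀ ℕ))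
    (I : Ideal (MvPolynomial (Fin n) K))
    (hI : I = Ideal.span ((fun a => (monomial a (1 : K))) '' (G : Set (Fin n →₀ ℕ))))
    {u : Fin n → ℝ} (hu : ∀ i, 0 < u i) {c : ℝ} (hc : ∀ g ∈ G, c ≤ dotR u (expVec g)) (k : ℕ) :
    ∀ f ∈ I ^ k, ∀ a ∈ f.support, k * c ≤ dotR u (expVec a) := by
  classical
  induction k with
  | zero => intro f _ a _; simpa using aux_dot_nonneg hu a
  | succ k ih =>
    intro f hf
    rw [pow_succ] at hf
    refine Submodule.mul_induction_on hf ?_ ?_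
    · intro p hp q hq a ha
      obtain ⟨b, hb, d, hd, rfl⟩ := Finset.mem_add.mp (support_mul p q ha)
      have h1 := ih p hp b hb
      rw [hI, mem_ideal_span_monomial_image] at hq
      obtain ⟨g, hg, hgd⟩ := hq d hd
      obtain ⟨e, rfl⟩ := exists_add_of_le hgd
      have := hc g hg
      have := aux_dot_nonneg hu e
      rw [aux_expVec_add, aux_expVec_add, aux_dot_add, aux_dot_add]
      push_cast
      linarith
    · intro x y hx hy a ha
      rcases Finset.mem_union.mp (support_add ha) with h | h
      · exact hx a h
      · exact hy a h

theorem aux_J_bound {K : Type*} [Field K] {n : ℕ} (G : Finset (Fin n →₀ ℕ))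
    (I : Ideal (MvPolynomial (Fin n) K))
    (hI : I = Ideal.span ((fun a => (monomial a (1 : K))) '' (G : Set (Fin n →₀ ℕ))))
    {u : Fin n → ℝ} (hu : ∀ i, 0 < u i) {c : ℝ} (hc : ∀ g ∈ G, c ≤ dotR u (expVec g)) :
    ∀ r ∈ AuxJ I, ∀ k, ∀ a ∈ ((r : Polynomial (MvPolynomial (Fin n) K)).coeff k).support,
      k * c < dotR u (expVec a) := by
  classical
  intro r hr
  induction hr using Submodule.span_induction with
  | mem x hx =>
    obtain ⟨i, rfl⟩ := hx
    intro k a ha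
    change a ∈ ((Polynomial.C (X i : MvPolynomial (Fin n) K)).coeff k).support at ha
    rw [Polynomial.coeff_C] at ha
    split_ifs at ha with hk
    · rw [support_X, Finset.mem_singleton] at ha
      subst ha hk
      simpa using aux_dot_pos hu (a := Finsupp.single i 1) (by simp)
    · simp at ha
  | zero => intro k a ha; simp at ha
  | add x y _ _ hx hy =>
    intro k a ha
    rw [Subalgebra.coe_add, Polynomial.coeff_add] at ha
    rcases Finset.mem_union.mp (support_add ha) with h | h
    · exact hx k a h
    · exact hy k a h
  | smul q x _ hx =>
    intro k a ha
    rw [smul_eq_mul, Subalgebra.coe_mul, Polynomial.coeff_mul, mem_support_iff, coeff_sum] at ha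
    obtain ⟨⟨i, j⟩, hij, h⟩ := Finset.exists_ne_zero_of_sum_ne_zero ha
    rw [← mem_support_iff] at h
    obtain ⟨b, hb, d, hd, rfl⟩ := Finset.mem_add.mp (support_mul _ _ h)
    have h1 := hx j d hd
    have h2 := aux_pow_bound G I hI hu hc i _ ((mem_reesAlgebra_iff I _).mp q.2 i) b hb
    rw [aux_expVec_add, aux_dot_add]
    have : (k : ℝ) = i + j := by rw [← Finset.HasAntidiagonal.mem_antidiagonal.mp hij]; push_cast; ring
    rw [this]
    linarith

theorem aux_algInd {K : Type*} [Field K] {n : ℕ} (G : Finset (Fin n →₀ ℕ))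
    (I : Ideal (MvPolynomial (Fin n) K))
    (hI : I = Ideal.span ((fun a => (monomial a (1 : K))) '' (G : Set (Fin n →₀ ℕ))))
    {u : Fin n → ℝ} (hu : ∀ i, 0 < u i) {c : ℝ} (hc : ∀ g ∈ G, c ≤ dotR u (expVec g))
    {ι : Type*} [Fintype ι] (a : ι → Fin n →₀ ℕ) (h : ∀ i, monomial (a i) (1 : K) ∈ I)
    (hac : ∀ i, dotR u (expVec (a i)) = c)
    (haff : AffineIndependent ℝ (fun i => expVec (a i))) :
    AlgebraicIndependent K (fun i => auxT I (a i) (h i)) := by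
  classical
  have hinj : ∀ α β : ι →₀ ℕ, ∑ i, α i = ∑ i, β i → ∑ i, α i • a i = ∑ i, β i • a i → α = β := by
    intro α β h1 h2
    rw [affineIndependent_iff] at haff
    have h3 := haff Finset.univ (fun i => (α i : ℝ) - β i) (by
      rw [Finset.sum_sub_distrib, sub_eq_zero]; exact_mod_cast h1) (by
      funext j
      have := congrArg (fun f => f j) h2
      simp only [Finsupp.coe_finsetSum, Finset.sum_apply, Finsupp.smul_apply, smul_eq_mul] at this
      simp only [Finset.sum_apply, Pi.smul_apply, smul_eq_mul, expVec, sub_mul,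
        Finset.sum_sub_distrib, Pi.zero_apply, sub_eq_zero]
      exact_mod_cast this)
    ext i
    have := h3 i (Finset.mem_univ _)
    rw [sub_eq_zero] at this
    exact_mod_cast this
  rw [algebraicIndependent_iff]
  intro f hf
  by_contra hf0
  obtain ⟨β, hβ⟩ := MvPolynomial.ne_zero_iff.mp hf0
  have e1 : aeval (fun i => auxT I (a i) (h i)) f =
      Ideal.Quotient.mk (AuxJ I) (∑ α ∈ f.support,
        algebraMap (MvPolynomial (Fin n) K) _ (C (coeff α f)) * ∏ i, auxTau I (a i) (h i) ^ α i) := by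
    rw [aeval_def, eval₂_eq', map_sum]
    refine Finset.sum_congr rfl fun α _ => ?_
    rw [map_mul, aux_algMap, constantCoeff_C]
    simp [auxT, map_prod]
  rw [e1, Ideal.Quotient.eq_zero_iff_mem] at hf
  have hb := aux_J_bound G I hI hu hc _ hf (∑ i, β i) (∑ i, β i • a i) ?_
  · have : dotR u (expVec (∑ i, β i • a i)) = (∑ i, β i : ℕ) * c := by
      have h1 : expVec (∑ i, β i • a i) = ∑ i, (β i : ℝ) • expVec (a i) := by
        funext j; simp [expVec, Finsupp.coe_finsetSum]
      have h2 : ∀ s : Finset ι, dotR u (∑ i ∈ s, (β i : ℝ) • expVec (a i)) = (∑ i ∈ s, β i : ℕ) * c := by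
        intro s
        induction s using Finset.induction_on with
        | empty => simp [dotR]
        | insert i s hi ih =>
          rw [Finset.sum_insert hi, Finset.sum_insert hi, aux_dot_add, ih, aux_dot_smul, hac]
          push_cast; ring
      rw [h1, h2]
    rw [this] at hb
    exact lt_irrefl _ hb
  · rw [mem_support_iff]
    convert hβ
    rw [AddSubmonoidClass.coe_finset_sum, Polynomial.finset_sum_coeff, coeff_sum,
      Finset.sum_eq_single β]
    · rw [Subalgebra.coe_mul, auxTau_prod]
      change coeff _ ((Polynomial.C _ * _).coeff _) = _
      simp [Polynomial.coeff_C_mul, coeff_C_mul]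
    · intro α _ hαβ
      rw [Subalgebra.coe_mul, auxTau_prod]
      change coeff _ ((Polynomial.C _ * _).coeff _) = _
      rw [Polynomial.coeff_C_mul, coeff_C_mul, Polynomial.coeff_monomial]
      split_ifs with h1
      · rw [coeff_monomial, if_neg, mul_zero]
        exact fun h2 => hαβ (hinj α β h1 h2)
      · simp
    · intro h0
      exact absurd hβ (by simpa [mem_support_iff] using h0)

theorem aux_bdd {K : Type*} [Field K] {n : ℕ} (I : Ideal (MvPolynomial (Fin n) K)) :
    BddAbove {d : ℕ | ∃ F, IsCompactFace (newtonPolyhedron I) F ∧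
      d = Module.finrank ℝ (affineSpan ℝ F).direction} := by
  refine ⟨n, ?_⟩
  rintro d ⟨F, -, rfl⟩
  simpa using Submodule.finrank_le (affineSpan ℝ F).direction

theorem aux_upper_card {K : Type*} [Field K] {n : ℕ} (hn : 0 < n) (G : Finset (Fin n →₀ ℕ))
    (I : Ideal (MvPolynomial (Fin n) K))
    (hI : I = Ideal.span ((fun a => (monomial a (1 : K))) '' (G : Set (Fin n →₀ ℕ))))
    (h : ∀ g : G, monomial (g : Fin n →₀ ℕ) (1 : K) ∈ I) (s : Finset G)
    (hind : AlgebraicIndependent K (fun i : s => auxT I (i : G) (h i))) :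
    s.card ≤ maxCompactFaceDim I + 1 := by
  rcases s.eq_empty_or_nonempty with rfl | hs
  · simp
  have hcard : 0 < s.card := hs.card_pos
  have hcardR : (0 : ℝ) < s.card := by exact_mod_cast hcard
  rcases aux_stiemke (fun (g : G) (j : Fin n) =>
      (s.card : ℤ) * ((g : Fin n →₀ ℕ) j : ℤ) - ∑ i ∈ s, ((i : Fin n →₀ ℕ) j : ℤ)) with
    ⟨u, hu, hpos⟩ | ⟨m, hm, j0, hj0⟩
  · -- the face
    set c : ℝ := (∑ i ∈ s, dotR u (expVec (i : Fin n →₀ ℕ))) / s.card with hcdef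
    have hcs : (s.card : ℝ) * c = ∑ i ∈ s, dotR u (expVec (i : Fin n →₀ ℕ)) := by
      rw [hcdef]; field_simp
    have hc' : ∀ g : G, c ≤ dotR u (expVec (g : Fin n →₀ ℕ)) := by
      intro g
      have h1 := hpos g
      have h2 : ∑ j, u j * (((s.card : ℤ) * ((g : Fin n →₀ ℕ) j : ℤ) -
          ∑ i ∈ s, ((i : Fin n →₀ ℕ) j : ℤ) : ℤ) : ℝ) =
          s.card * dotR u (expVec (g : Fin n →₀ ℕ)) -
            ∑ i ∈ s, dotR u (expVec (i : Fin n →₀ ℕ)) := by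
        simp only [dotR, expVec]
        rw [Finset.sum_comm, Finset.mul_sum, ← Finset.sum_sub_distrib]
        refine Finset.sum_congr rfl fun j _ => ?_
        push_cast
        rw [mul_sub, Finset.mul_sum]
        ring
      rw [h2, ← hcs] at h1
      have : 0 ≤ (s.card : ℝ) * (dotR u (expVec (g : Fin n →₀ ℕ)) - c) := by linarith
      have := nonneg_of_mul_nonneg_right this hcardR
      linarith
    have hceq : ∀ i ∈ s, dotR u (expVec (i : Fin n →₀ ℕ)) = c := by
      have h1 : ∑ i ∈ s, c = ∑ i ∈ s, dotR u (expVec (i : Fin n →₀ ℕ)) := by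
        rw [← hcs]; simp
      intro i hi
      exact ((Finset.sum_eq_sum_iff_of_le fun i _ => hc' i).mp h1 i hi).symm
    have hc : ∀ g ∈ G, c ≤ dotR u (expVec g) := fun g hg => hc' ⟨g, hg⟩
    obtain ⟨i0, hi0⟩ := hs
    have hface := aux_isCompactFace hn G I hI hu hc ⟨i0, i0.2, hceq i0 hi0⟩
    set F := {v ∈ newtonPolyhedron I | dotR u v = c} with hF
    have hle : Module.finrank ℝ (affineSpan ℝ F).direction ≤ maxCompactFaceDim I :=
      le_csSup (aux_bdd I) ⟨F, hface, rfl⟩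
    have haff : AffineIndependent ℝ (fun i : s => expVec ((i : G) : Fin n →₀ ℕ)) := by
      refine aux_affine (fun i : s => fun j => ((i : G) : Fin n →₀ ℕ) j) ?_
      intro α β h1 h2
      refine aux_inj_of_indep I (fun i : s => ((i : G) : Fin n →₀ ℕ)) (fun i => h i) hind α β h1 ?_
      ext j
      simpa [Finsupp.coe_finsetSum] using h2 j
    have hfr := haff.finrank_vectorSpan (n := s.card - 1) (by simp; omega)
    have hsub : vectorSpan ℝ (Set.range fun i : s => expVec ((i : G) : Fin n →₀ ℕ)) ≤
        (affineSpan ℝ F).direction := by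
      rw [direction_affineSpan]
      apply vectorSpan_mono
      rintro _ ⟨i, rfl⟩
      refine ⟨subset_convexHull ℝ _ ⟨_, h i, rfl⟩, hceq i i.2⟩
    have := Submodule.finrank_mono hsub
    omega
  · exfalso
    set M := ∑ g, m g with hM
    have hcoord : ∀ j, ∑ g : G, (m g : ℤ) * ((s.card : ℤ) * ((g : Fin n →₀ ℕ) j : ℤ) -
        ∑ i ∈ s, ((i : Fin n →₀ ℕ) j : ℤ)) =
        (((∑ g : G, (s.card * m g) • (g : Fin n →₀ ℕ)) j : ℕ) : ℤ) -
        (((∑ g : G, (if g ∈ s then M else 0) • (g : Fin n →₀ ℕ)) j : ℕ) : ℤ) := by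
      intro j
      simp only [Finsupp.coe_finsetSum, Finset.sum_apply, Finsupp.smul_apply, smul_eq_mul, ite_mul,
        zero_mul, Finset.sum_ite_mem, Finset.univ_inter]
      push_cast
      simp only [mul_sub, Finset.sum_sub_distrib, hM]
      rw [← Finset.sum_mul, ← Finset.mul_sum]
      push_cast
      congr 1
      exact Finset.sum_congr rfl fun g _ => by ring
    have hz := aux_zero I (fun g : G => (g : Fin n →₀ ℕ)) h (fun g => s.card * m g)
      (fun g => if g ∈ s then M else 0) ?_ ?_ ?_
    · refine aux_prod_ne_zero I (fun i : s => ((i : G) : Fin n →₀ ℕ)) (fun i => h i) hind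
        (fun _ => M) ?_
      rw [← hz]
      rw [Finset.prod_coe_sort s (fun i : G => auxT I i (h i) ^ M)]
      simp only [pow_ite, pow_zero, Finset.prod_ite_mem, Finset.univ_inter]
    · rw [← Finset.mul_sum]; simp only [Finset.sum_ite_mem, Finset.univ_inter, Finset.sum_const, smul_eq_mul, hM]
    · intro j
      have := hm j
      rw [hcoord] at this
      omega
    · intro he
      rw [hcoord, he] at hj0
      simp at hj0

theorem stmt17 {K : Type*} [Field K] {n : ℕ} (I : Ideal (MvPolynomial (Fin n) K))
    (hI : IsMonomialIdeal I) (hne : I ≠ ⊥) (hproper : I ≠ ⊤) :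
    ringKrullDim ((reesAlgebra I) ⧸ Ideal.span (Set.range fun i =>
        algebraMap (MvPolynomial (Fin n) K) (reesAlgebra I) (X i))) =
      ((maxCompactFaceDim I + 1 : ℕ) : WithBot ℕ∞) := by
  have hG : ∃ G : Finset (Fin n →₀ ℕ),
      I = Ideal.span ((fun a => (monomial a (1 : K))) '' (G : Set (Fin n →₀ ℕ))) := by
    obtain ⟨S, hS⟩ := hI
    have hfg : (Ideal.span ((fun a => (monomial a (1 : K))) '' S)).FG :=
      (isNoetherianRing_iff_ideal_fg _).mp inferInstance _
    obtain ⟨t, ht, hts⟩ := (Submodule.fg_span_iff_fg_span_finset_subset _).mp hfg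
    obtain ⟨G, hGS, rfl⟩ := Finset.subset_set_image_iff.mp ht
    refine ⟨G, ?_⟩
    rw [hS]
    simpa using hts
  obtain ⟨G, hG⟩ := hG
  have hmem : ∀ g ∈ G, monomial g (1 : K) ∈ I := by
    intro g hg
    rw [hG]
    exact Ideal.subset_span ⟨g, hg, rfl⟩
  have hGne : G.Nonempty := by
    rw [Finset.nonempty_iff_ne_empty]
    rintro rfl
    exact hne (by simpa using hG)
  have hn : 0 < n := by
    obtain ⟨g, hg⟩ := hGne
    rcases Nat.eq_zero_or_pos n with rfl | h
    · exfalso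
      apply hproper
      rw [Ideal.eq_top_iff_one]
      have := hmem g hg
      rwa [Subsingleton.elim g 0] at this
    · exact h
  have h : ∀ g : G, monomial (g : Fin n →₀ ℕ) (1 : K) ∈ I := fun g => hmem g g.2
  have hadj := aux_adjoin G I hG h
  have : Algebra.FiniteType K (reesAlgebra I ⧸ AuxJ I) := by
    refine ⟨Subalgebra.fg_def.mpr ⟨_, Set.finite_range _, hadj⟩⟩
  change ringKrullDim (reesAlgebra I ⧸ AuxJ I) = _
  apply le_antisymm
  · exact aux_upper (fun g : G => auxT I g (h g)) hadj (maxCompactFaceDim I + 1)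
      fun s hs => aux_upper_card hn G I hG h s hs
  · have hnonempty : {d : ℕ | ∃ F, IsCompactFace (newtonPolyhedron I) F ∧
      d = Module.finrank ℝ (affineSpan ℝ F).direction}.Nonempty := by
      obtain ⟨g, hg, hmin⟩ := G.exists_min_image (fun g => dotR (fun _ => 1) (expVec g)) hGne
      exact ⟨_, _, aux_isCompactFace hn G I hG (u := fun _ => 1) (fun _ => one_pos) hmin
        ⟨g, hg, rfl⟩, rfl⟩
    obtain ⟨F, hF, hFd⟩ := Nat.sSup_mem hnonempty (aux_bdd I)
    change maxCompactFaceDim I = _ at hFd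
    obtain ⟨u, c, hu, hc, ⟨g0, hg0, hg0c⟩, hFe⟩ := aux_compactFace G I hG hF
    set P := expVec '' {g : Fin n →₀ ℕ | g ∈ G ∧ dotR u (expVec g) = c} with hP
    have hPfin : P.Finite := (G.finite_toSet.subset fun g hg => hg.1).image _
    obtain ⟨t, htP, hts, htind⟩ := exists_affineIndependent ℝ (Fin n → ℝ) P
    have htfin : t.Finite := hPfin.subset htP
    haveI : Fintype t := htfin.fintype
    have htne : t.Nonempty := by
      rw [← affineSpan_nonempty ℝ, hts, affineSpan_nonempty]
      exact ⟨_, g0, ⟨hg0, hg0c⟩, rfl⟩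
    haveI : Nonempty t := htne.to_subtype
    have hcard := htind.finrank_vectorSpan_add_one
    rw [Subtype.range_coe, ← direction_affineSpan, hts, ← affineSpan_convexHull, ← hFe,
      ← hFd] at hcard
    choose a ha hav using fun i : t => htP i.2
    have hai : ∀ i, monomial (a i) (1 : K) ∈ I := fun i => hmem _ (ha i).1
    have hlow := aux_lower _ (aux_algInd G I hG hu hc a hai (fun i => (ha i).2)
      (by simpa only [hav] using htind))
    rw [Nat.card_eq_fintype_card, ← hcard] at hlow
    exact hlow
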